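/- Let m, n be natural numbers with 0 ≤ m ≤ n, and let x > 1 be real. Then d^m/dx^m [P_n(x)·log(x+1)] = P_n^{(m)}(x)·log(x+1) + (ψ(n+m+1) − ψ(n−m+1))·P_n^{(m)}(x) − 2^{−m} Σ_{k=0}^{n−m} ((k+n+m)!/(k!·(k+m)!·(n−m−k)!))·(2ψ(k+n+m+1) − ψ(k+m+1)) · ((x−1)/2)^k + ((n+m)!/(n−m)!)·(x+1)^{−m} Σ_{k=0}^{n} ((k+n)!/(k!·(k+m)!·(n−k)!))·(2ψ(k+n+1) − ψ(k+m+1)) · ((x−1)/2)^k. -/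

import Mathlib

open Finset Real

/-- The Legendre polynomial `P_n`, via its explicit expansion
`P_n(x) = ∑_{k=0}^{n} ((n+k)!/((k!)² (n−k)!)) ((x−1)/2)^k`. -/
noncomputable def legendreP (n : ℕ) (x : ℝ) : ℝ :=
  ∑ k ∈ Finset.range (n + 1),
    (((n + k).factorial : ℝ) / (((k.factorial : ℝ)) ^ 2 * ((n - k).factorial : ℝ))) *
      ((x - 1) / 2) ^ k

/-- The harmonic number `H_i = ∑_{r=1}^{i} 1/r`. -/
noncomputable def harm (i : ℕ) : ℝ := ∑ r ∈ Finset.range i, (1 : ℝ) / (r + 1)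

/-- The digamma function at a positive integer `j`: `ψ(j) = H_{j−1} − γ`. -/
noncomputable def psi (j : ℕ) : ℝ := harm (j - 1) - Real.eulerMascheroniConstant

noncomputable def SS (a : ℕ → ℝ) (N : ℕ) (x : ℝ) : ℝ :=
  ∑ k ∈ Finset.range (N + 1), a k * ((x - 1) / 2) ^ k

noncomputable def SD (a : ℕ → ℝ) (N : ℕ) (x : ℝ) : ℝ :=
  ∑ k ∈ Finset.range N, (((k : ℝ) + 1) * a (k + 1)) * ((x - 1) / 2) ^ k

lemma SS_deriv (a : ℕ → ℝ) (N : ℕ) (x : ℝ) : HasDerivAt (SS a N) (1 / 2 * SD a N x) x := by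
  have h : ∀ k ∈ Finset.range (N + 1), HasDerivAt (fun y : ℝ => a k * ((y - 1) / 2) ^ k)
      (a k * ((k : ℝ) * ((x - 1) / 2) ^ (k - 1) * (1 / 2))) x := by
    intro k _
    exact ((((hasDerivAt_id x).sub_const 1).div_const 2).pow k).const_mul (a k)
  have h2 := HasDerivAt.fun_sum h
  have e : (1 / 2 * SD a N x) = ∑ k ∈ Finset.range (N + 1),
      (a k * ((k : ℝ) * ((x - 1) / 2) ^ (k - 1) * (1 / 2))) := by
    rw [Finset.sum_range_succ', SD, Finset.mul_sum]
    simp only [Nat.cast_zero, zero_mul, mul_zero, add_zero]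
    apply Finset.sum_congr rfl
    intro k _
    rw [Nat.add_sub_cancel]
    push_cast
    ring
  rw [e]
  exact h2

lemma SS_comb (a c : ℕ → ℝ) (N : ℕ) (m x : ℝ)
    (hk : ∀ k < N, ((k : ℝ) + 1) * a (k + 1) + (k - m) * a k = c k)
    (hN : ((N : ℝ) - m) * a N = c N) :
    (x + 1) / 2 * SD a N x - m * SS a N x = SS c N x := by
  have e1 : SS c N x = ∑ k ∈ Finset.range N,
      (((k : ℝ) + 1) * a (k + 1) + (k - m) * a k) * ((x - 1) / 2) ^ k
      + ((N : ℝ) - m) * a N * ((x - 1) / 2) ^ N := by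
    rw [SS, Finset.sum_range_succ, hN]
    congr 1
    apply Finset.sum_congr rfl
    intro k h
    rw [hk k (Finset.mem_range.mp h)]
  have e2 : (x - 1) / 2 * SD a N x
      = ∑ k ∈ Finset.range (N + 1), (k : ℝ) * a k * ((x - 1) / 2) ^ k := by
    rw [Finset.sum_range_succ', SD, Finset.mul_sum]
    simp only [Nat.cast_zero, zero_mul, add_zero]
    apply Finset.sum_congr rfl
    intro k _
    push_cast
    ring
  have e3 : (x + 1) / 2 * SD a N x = SD a N x + (x - 1) / 2 * SD a N x := by ring
  rw [e3, e2, e1, SD, SS, Finset.sum_range_succ, Finset.sum_range_succ]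
  simp only [add_mul, sub_mul, Finset.sum_add_distrib, Finset.sum_sub_distrib, mul_add,
    Finset.mul_sum, mul_assoc]
  ring

noncomputable def gc (n m k : ℕ) : ℝ :=
  ((k + n).factorial : ℝ) / ((k.factorial : ℝ) * ((k + m).factorial : ℝ) * ((n - k).factorial : ℝ))

noncomputable def bc (n m k : ℕ) : ℝ := gc n m k * (2 * psi (k + n + 1) - psi (k + m + 1))

noncomputable def ac (n m k : ℕ) : ℝ :=
  ((k + n + m).factorial : ℝ) /
    ((k.factorial : ℝ) * ((k + m).factorial : ℝ) * ((n - m - k).factorial : ℝ)) *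
      (2 * psi (k + n + m + 1) - psi (k + m + 1))

lemma psi_succ (j : ℕ) : psi (j + 1 + 1) = psi (j + 1) + 1 / ((j : ℝ) + 1) := by
  simp only [psi, harm, Nat.add_sub_cancel, Finset.sum_range_succ]
  ring

lemma gc_k (n m k : ℕ) (h : k < n) :
    ((k : ℝ) + 1) * gc n m (k + 1) = gc n m k * ((k + n + 1) * (n - k)) / (k + m + 1) := by
  obtain ⟨d, rfl⟩ := Nat.exists_eq_add_of_lt h
  have e1 : k + d + 1 - k = d + 1 := by omega
  have e2 : k + d + 1 - (k + 1) = d := by omega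
  have e3 : k + 1 + (k + d + 1) = (k + (k + d + 1)) + 1 := by omega
  have e4 : k + 1 + m = (k + m) + 1 := by omega
  simp only [gc, e1, e2, e3, e4, Nat.factorial_succ]
  have := Nat.factorial_pos k
  have := Nat.factorial_pos (k + m)
  have := Nat.factorial_pos d
  push_cast
  have : (k : ℝ) + m + 1 ≠ 0 := by positivity
  field_simp
  ring

lemma gc_m (n m k : ℕ) : gc n (m + 1) k = gc n m k / (k + m + 1) := by
  simp only [gc, ← add_assoc, Nat.factorial_succ]
  push_cast
  have := Nat.factorial_pos k
  have := Nat.factorial_pos (k + m)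
  have := Nat.factorial_pos (n - k)
  have : (k : ℝ) + m + 1 ≠ 0 := by positivity
  field_simp

lemma G_rec (n m : ℕ) (x : ℝ) :
    (x + 1) / 2 * SD (gc n m) n x - m * SS (gc n m) n x
      = ((n + m + 1) * (n - m)) * SS (gc n (m + 1)) n x := by
  rw [SS_comb (gc n m) (fun k => ((n + m + 1) * (n - m)) * gc n (m + 1) k) n m x]
  · simp only [SS, Finset.mul_sum, mul_assoc]
  · intro k hk
    have : (k : ℝ) + m + 1 ≠ 0 := by positivity
    rw [gc_k n m k hk, gc_m]
    field_simp
    ring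
  · have : (n : ℝ) + m + 1 ≠ 0 := by positivity
    simp only [gc_m]
    field_simp

lemma B_rec (n m : ℕ) (x : ℝ) :
    (x + 1) / 2 * SD (bc n m) n x - m * SS (bc n m) n x
      = ((n + m + 1) * (n - m)) * SS (bc n (m + 1)) n x
        + (2 * n + 1) * SS (gc n (m + 1)) n x - SS (gc n m) n x := by
  rw [SS_comb (bc n m) (fun k => ((n + m + 1) * (n - m)) * bc n (m + 1) k
    + (2 * n + 1) * gc n (m + 1) k - gc n m k) n m x]
  · simp only [SS, Finset.mul_sum, mul_assoc, add_mul, sub_mul, Finset.sum_add_distrib,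
      Finset.sum_sub_distrib]
  · intro k hk
    have : (k : ℝ) + m + 1 ≠ 0 := by positivity
    have : (k : ℝ) + n + 1 ≠ 0 := by positivity
    have e1 : k + 1 + n = k + n + 1 := by omega
    have e2 : k + 1 + m = k + m + 1 := by omega
    simp only [bc]
    rw [← mul_assoc, gc_k n m k hk, gc_m, ← add_assoc, e1, e2, psi_succ, psi_succ]
    push_cast
    field_simp
    ring
  · have : (n : ℝ) + m + 1 ≠ 0 := by positivity
    simp only [bc, gc_m, ← add_assoc, psi_succ]
    push_cast
    field_simp
    ring

lemma A_rec (n m : ℕ) (h : m < n) (x : ℝ) :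
    SD (ac n m) (n - m) x = SS (ac n (m + 1)) (n - (m + 1)) x := by
  have e : n - (m + 1) + 1 = n - m := by omega
  rw [SD, SS, e]
  apply Finset.sum_congr rfl
  intro k _
  congr 1
  have e1 : k + 1 + n + m = k + n + (m + 1) := by omega
  have e2 : k + 1 + m = k + (m + 1) := by omega
  have e3 : n - m - (k + 1) = n - (m + 1) - k := by omega
  simp only [ac, e1, e2, e3, Nat.factorial_succ k]
  have := Nat.factorial_pos k
  have := Nat.factorial_pos (k + (m + 1))
  have := Nat.factorial_pos (n - (m + 1) - k)
  push_cast
  field_simp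

noncomputable def cc (n m : ℕ) : ℝ := ((n + m).factorial : ℝ) / ((n - m).factorial : ℝ)

lemma cc_succ (n m : ℕ) (h : m < n) : cc n (m + 1) = cc n m * ((n + m + 1) * (n - m)) := by
  obtain ⟨d, rfl⟩ := Nat.exists_eq_add_of_lt h
  have e1 : m + d + 1 - m = d + 1 := by omega
  have e2 : m + d + 1 - (m + 1) = d := by omega
  simp only [cc, e1, e2, ← add_assoc, Nat.factorial_succ]
  have := Nat.factorial_pos d
  push_cast
  field_simp
  ring

lemma zp_deriv (m : ℕ) (x : ℝ) (hx : 1 < x) : HasDerivAt (fun y : ℝ => (y + 1) ^ (-(m : ℤ)))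
    (-(m : ℝ) * (x + 1) ^ (-((m + 1 : ℕ) : ℤ))) x := by
  have h := (hasDerivAt_zpow (-(m : ℤ)) (x + 1) (Or.inl (by linarith))).comp x
    ((hasDerivAt_id x).add_const 1)
  have e : -(m : ℤ) - 1 = -((m + 1 : ℕ) : ℤ) := by push_cast; ring
  rw [e] at h
  simpa [Function.comp_def] using h

lemma leg_eq (n : ℕ) : legendreP n = SS (gc n 0) n := by
  funext x
  simp only [legendreP, SS, gc, add_zero]
  apply Finset.sum_congr rfl
  intro k _
  rw [add_comm n k, sq]

lemma zp_succ (m : ℕ) (x : ℝ) (hx : 1 < x) :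
    (x + 1) ^ (-(m : ℤ)) = (x + 1) * (x + 1) ^ (-((m + 1 : ℕ) : ℤ)) := by
  have h : x + 1 ≠ 0 := by linarith
  rw [← zpow_one_add₀ h]
  congr 1
  push_cast
  ring

lemma two_succ (m : ℕ) :
    (2 : ℝ) ^ (-((m + 1 : ℕ) : ℤ)) = 1 / 2 * (2 : ℝ) ^ (-(m : ℤ)) := by
  rw [zpow_neg, zpow_neg, zpow_natCast, zpow_natCast, pow_succ]
  field_simp

lemma P_iter (n m : ℕ) (h : m ≤ n) : ∀ x : ℝ, 1 < x → iteratedDeriv m (legendreP n) x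
    = cc n m * (x + 1) ^ (-(m : ℤ)) * SS (gc n m) n x := by
  induction m with
  | zero =>
    intro x _
    have : (n.factorial : ℝ) ≠ 0 := by positivity
    simp [leg_eq, cc, this]
  | succ m ih =>
    intro x hx
    have ih := ih (by omega)
    have ev : iteratedDeriv m (legendreP n) =ᶠ[nhds x]
        fun y => cc n m * (y + 1) ^ (-(m : ℤ)) * SS (gc n m) n y :=
      (eventually_gt_nhds hx).mono ih
    rw [iteratedDeriv_succ, ev.deriv_eq,
      (((zp_deriv m x hx).const_mul (cc n m)).fun_mul (SS_deriv (gc n m) n x)).deriv,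
      zp_succ m x hx, cc_succ n m (by omega)]
    linear_combination (cc n m * (x + 1) ^ (-((m + 1 : ℕ) : ℤ))) * G_rec n m x

lemma P_hd (n m : ℕ) (x : ℝ) : HasDerivAt (iteratedDeriv m (legendreP n))
    (iteratedDeriv (m + 1) (legendreP n) x) x := by
  have h : ContDiff ℝ ⊤ (legendreP n) := by
    unfold legendreP
    fun_prop
  rw [iteratedDeriv_succ]
  exact ((h.differentiable_iteratedDeriv m (by exact_mod_cast WithTop.coe_lt_top _)) x).hasDerivAt

lemma Q_iter (n m : ℕ) (h : m ≤ n) : ∀ x : ℝ, 1 < x →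
    iteratedDeriv m (fun y => legendreP n y * Real.log (y + 1)) x =
      iteratedDeriv m (legendreP n) x * Real.log (x + 1)
      + (psi (n + m + 1) - psi (n - m + 1)) * iteratedDeriv m (legendreP n) x
      - (2 : ℝ) ^ (-(m : ℤ)) * SS (ac n m) (n - m) x
      + cc n m * (x + 1) ^ (-(m : ℤ)) * SS (bc n m) n x := by
  induction m with
  | zero =>
    intro x _
    have : (n.factorial : ℝ) ≠ 0 := by positivity
    have e : ac n 0 = bc n 0 := by
      funext k
      simp [ac, bc, gc]
    simp [cc, this, e]
  | succ m ih =>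
    intro x hx
    have ih := ih (by omega)
    have ev := (eventually_gt_nhds hx).mono ih
    have hx1 : x + 1 ≠ 0 := by linarith
    have hl : HasDerivAt (fun y : ℝ => Real.log (y + 1)) (1 / (x + 1)) x :=
      ((hasDerivAt_id x).add_const 1).log hx1
    have hd := ((((P_hd n m x).fun_mul hl).fun_add
      ((P_hd n m x).const_mul (psi (n + m + 1) - psi (n - m + 1)))).fun_sub
      ((SS_deriv (ac n m) (n - m) x).const_mul ((2 : ℝ) ^ (-(m : ℤ))))).fun_add
      (((zp_deriv m x hx).const_mul (cc n m)).fun_mul (SS_deriv (bc n m) n x))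
    have hev := Filter.EventuallyEq.deriv_eq ev
    rw [iteratedDeriv_succ, hev, hd.deriv, A_rec n m (by omega), two_succ,
      zp_succ m x hx, P_iter n m (by omega) x hx, P_iter n (m + 1) h x hx, zp_succ m x hx,
      cc_succ n m (by omega)]
    have p1 : psi (n + (m + 1) + 1) = psi (n + m + 1) + 1 / ((n : ℝ) + m + 1) := by
      rw [← add_assoc, psi_succ]
      push_cast
      rfl
    have p2 : psi (n - m + 1) = psi (n - (m + 1) + 1) + 1 / ((n : ℝ) - m) := by
      have e : n - m = n - (m + 1) + 1 := by omega
      have e' : ((n - (m + 1) : ℕ) : ℝ) + 1 = n - m := by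
        rw [Nat.cast_sub h]
        push_cast
        ring
      rw [e, psi_succ, e']
    rw [p1, p2]
    have hB := B_rec n m x
    have q1 : (n : ℝ) + m + 1 ≠ 0 := by positivity
    have q2 : (n : ℝ) - m ≠ 0 := by
      have : (m : ℝ) < n := by exact_mod_cast h
      linarith
    generalize (x + 1) ^ (-((m + 1 : ℕ) : ℤ)) = Z at *
    generalize SS (gc n (m + 1)) n x = G1 at *
    have k : (1 / ((n : ℝ) + m + 1) + 1 / ((n : ℝ) - m)) * ((n + m + 1) * (n - m)) = 2 * n + 1 := by
      field_simp
      ring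
    have k2 : (x + 1) * (1 / (x + 1)) = 1 := by field_simp
    linear_combination (cc n m * Z) * hB + (-cc n m * Z * G1) * k
      + (cc n m * Z * SS (gc n m) n x) * k2

theorem stmt_4 (m n : ℕ) (hmn : m ≤ n) (x : ℝ) (hx : 1 < x) :
    iteratedDeriv m (fun y => legendreP n y * Real.log (y + 1)) x =
      iteratedDeriv m (legendreP n) x * Real.log (x + 1)
      + (psi (n + m + 1) - psi (n - m + 1)) * iteratedDeriv m (legendreP n) x
      - (2 : ℝ) ^ (-(m : ℤ)) *
          ∑ k ∈ Finset.range (n - m + 1),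
            ((k + n + m).factorial : ℝ) /
                ((k.factorial : ℝ) * ((k + m).factorial : ℝ) * ((n - m - k).factorial : ℝ)) *
              (2 * psi (k + n + m + 1) - psi (k + m + 1)) * ((x - 1) / 2) ^ k
      + ((n + m).factorial : ℝ) / ((n - m).factorial : ℝ) * (x + 1) ^ (-(m : ℤ)) *
          ∑ k ∈ Finset.range (n + 1),
            ((k + n).factorial : ℝ) /
                ((k.factorial : ℝ) * ((k + m).factorial : ℝ) * ((n - k).factorial : ℝ)) *
              (2 * psi (k + n + 1) - psi (k + m + 1)) * ((x - 1) / 2) ^ k := by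
  exact Q_iter n m hmn x hx
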